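/- arXiv:2510.04446 — 2 statements merged into one kernel-verified Lean document; each statement's English description precedes it below -/
import Mathlib

section
/- Let F : ℝ^d → ℝ be G-Lipschitz continuous and differentiable everywhere, let h : ℝ^d → ℝ ∪ {+∞} be proper, lower semicontinuous and convex, and let δ > 0, ε ≥ 0. If the randomized smoothing F_δ is differentiable at x ∈ ℝ^d and W_h(x, ∇F_δ(x)) ≤ ε, then there exists g ∈ ∂_δF(x) with W_h(x, g) ≤ ε (i.e., x is a (δ, ε)-conditional gradient Goldstein stationary point). -/
/-!
The point `g = ∇Fδ(x)` itself works. Since `F` is Lipschitz and differentiable everywhere, one may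
differentiate under the integral sign, so `∇Fδ(x) = ∫ ∇F(x + δu) dμ(u)`. This is an average of
gradients at points of the closed `δ`-ball around `x`, hence lies in the closed convex hull of those
gradients.
-/

open MeasureTheory
open scoped RealInnerProductSpace

noncomputable section

/-- The regularized Frank–Wolfe gap `W_h(x, g) = sup_y [h(x) − h(y) + ⟨y − x, −g⟩]`,
valued in the extended reals. -/
noncomputable def FWgap {d : ℕ} (h : EuclideanSpace ℝ (Fin d) → EReal) (x g : EuclideanSpace ℝ (Fin d)) : EReal :=
  ⨆ y : EuclideanSpace ℝ (Fin d), (h x - h y + ((⟪y - x, -g⟫ : ℝ) : EReal))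

/-- Differentiation under the integral: the gradient of the smoothing is the average gradient. -/
theorem gradient_smoothing {d : ℕ} {F : EuclideanSpace ℝ (Fin d) → ℝ} {K : NNReal}
    (hF : LipschitzWith K F) (hFdiff : Differentiable ℝ F) (δ : ℝ)
    (μ : Measure (EuclideanSpace ℝ (Fin d))) [IsProbabilityMeasure μ]
    (hμsphere : ∀ᵐ u ∂μ, ‖u‖ = 1) (x : EuclideanSpace ℝ (Fin d)) :
    Integrable (fun u => gradient F (x + δ • u)) μ ∧
      gradient (fun z => ∫ u, F (z + δ • u) ∂μ) x = ∫ u, gradient F (x + δ • u) ∂μ := by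
  have hmeas : AEStronglyMeasurable (fun u => fderiv ℝ F (x + δ • u)) μ :=
    ((measurable_fderiv ℝ F).comp (by fun_prop)).aestronglyMeasurable
  have hcont : ∀ z : EuclideanSpace ℝ (Fin d), Continuous fun u => F (z + δ • u) := fun z =>
    hF.continuous.comp (by fun_prop)
  have hint : Integrable (fun u => F (x + δ • u)) μ := by
    refine Integrable.of_bound (hcont x).aestronglyMeasurable (‖F x‖ + K * |δ|) ?_
    filter_upwards [hμsphere] with u hu
    have h1 := hF.norm_sub_le (x + δ • u) x
    rw [add_sub_cancel_left, norm_smul, hu, mul_one, Real.norm_eq_abs δ] at h1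
    have h2 := norm_le_norm_add_norm_sub' (F (x + δ • u)) (F x)
    linarith
  have hder : HasFDerivAt (fun z => ∫ u, F (z + δ • u) ∂μ)
      (∫ u, fderiv ℝ F (x + δ • u) ∂μ) x := by
    refine (hasFDerivAt_integral_of_dominated_loc_of_lip (bound := fun _ => (K : ℝ))
      (s := Set.univ) Filter.univ_mem
      (Filter.Eventually.of_forall fun z => (hcont z).aestronglyMeasurable) hint hmeas
      (Filter.Eventually.of_forall fun u => ?_) (integrable_const _)
      (Filter.Eventually.of_forall fun u => ?_)).2
    · refine LipschitzWith.lipschitzOnWith (LipschitzWith.of_dist_le_mul fun p q => ?_)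
      simpa using hF.dist_le_mul (p + δ • u) (q + δ • u)
    · exact (hasFDerivAt_comp_add_right (δ • u)).mpr (hFdiff (x + δ • u)).hasFDerivAt
  have hdint : Integrable (fun u => fderiv ℝ F (x + δ • u)) μ :=
    Integrable.of_bound hmeas K
      (Filter.Eventually.of_forall fun u => norm_fderiv_le_of_lipschitz ℝ hF)
  let T := (InnerProductSpace.toDual ℝ (EuclideanSpace ℝ (Fin d))).symm
  refine ⟨T.toContinuousLinearEquiv.integrable_comp_iff.mpr hdint, ?_⟩
  unfold gradient
  rw [hder.fderiv]
  exact (T.toContinuousLinearEquiv.integral_comp_comm _).symm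

theorem stmt5 {d : ℕ}
    (F : EuclideanSpace ℝ (Fin d) → ℝ) (G : ℝ) (hG : 0 < G)
    (hF : ∀ p q : EuclideanSpace ℝ (Fin d), |F p - F q| ≤ G * ‖p - q‖)
    (hFdiff : Differentiable ℝ F)
    (h : EuclideanSpace ℝ (Fin d) → EReal)
    (hbot : ∀ z, h z ≠ ⊥)
    (hlsc : LowerSemicontinuous h)
    (hconv : ∀ p q : EuclideanSpace ℝ (Fin d), ∀ a b : ℝ, 0 ≤ a → 0 ≤ b → a + b = 1 →
      h (a • p + b • q) ≤ (a : EReal) * h p + (b : EReal) * h q)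
    (hproper : ∃ z, h z ≠ ⊤)
    (δ ε : ℝ) (hδ : 0 < δ) (hε : 0 ≤ ε)
    (μ : Measure (EuclideanSpace ℝ (Fin d))) [IsProbabilityMeasure μ]
    (hμsphere : ∀ᵐ u ∂μ, ‖u‖ = 1)
    (hμrot : ∀ Q : EuclideanSpace ℝ (Fin d) ≃ₗᵢ[ℝ] EuclideanSpace ℝ (Fin d), μ.map Q = μ)
    (Fδ : EuclideanSpace ℝ (Fin d) → ℝ) (hFδ : Fδ = fun z => ∫ u, F (z + δ • u) ∂μ)
    (x : EuclideanSpace ℝ (Fin d))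
    (hFδdiff : DifferentiableAt ℝ Fδ x)
    (hsmall : FWgap h x (gradient Fδ x) ≤ (ε : EReal)) :
    ∃ g ∈ closure (convexHull ℝ (gradient F '' Metric.closedBall x δ)),
      FWgap h x g ≤ (ε : EReal) := by
  refine ⟨gradient Fδ x, ?_, hsmall⟩
  have hlip : LipschitzWith ⟨G, hG.le⟩ F := LipschitzWith.of_dist_le_mul fun p q => by
    rw [Real.dist_eq, dist_eq_norm]
    exact hF p q
  obtain ⟨hint, heq⟩ := gradient_smoothing hlip hFdiff δ μ hμsphere x
  rw [hFδ, heq]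
  refine (convex_convexHull ℝ _).closure.integral_mem isClosed_closure ?_ hint
  filter_upwards [hμsphere] with u hu
  refine subset_closure (subset_convexHull ℝ _ ⟨x + δ • u, ?_, rfl⟩)
  simp [norm_smul, hu, abs_of_pos hδ]
end
end

section
/- Let F : ℝ^d → ℝ be differentiable with L-Lipschitz continuous gradient (L > 0), let h : ℝ^d → ℝ ∪ {+∞} be proper, lower semicontinuous and convex, let γ = 1/L, and let x ∈ ℝ^d with h(x) < +∞ and g ∈ ℝ^d. Set x⁺ = prox_{γh}(x − γg). Then F(x⁺) + h(x⁺) ≤ F(x) + h(x) − (γ/2)·‖𝒢_{γh}(x, g)‖² + γ·⟨g − ∇F(x), 𝒢_{γh}(x, ∇F(x))⟩ + γ·‖g − ∇F(x)‖². -/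
/-!
Write `G` for the gradient mapping at `(x, g)`, `G₀` for the one at `(x, ∇F x)`, and `δ = g - ∇F x`.
Since `γ = 1 / L`, the descent lemma gives `F x⁺ ≤ F x - γ⟪∇F x, G⟫ + (γ/2)‖G‖²`. The optimality
condition of the proximal step says that `(z - prox z) / γ` is a subgradient of `h` at `prox z`;
tested at `x` with `z = x - γ g` it gives `h x⁺ ≤ h x - γ‖G‖² + γ⟪g, G⟫`. The sum is the claim with
`γ⟪δ, G⟫` in place of `γ⟪δ, G₀⟫ + γ‖δ‖²`, and `⟪δ, G - G₀⟫ ≤ ‖δ‖²` because the proximal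
operator is nonexpansive.
-/

open MeasureTheory
open scoped RealInnerProductSpace

noncomputable section

/-- The descent lemma: a function with `L`-Lipschitz gradient lies below its quadratic model. -/
theorem descent_le {E : Type*} [NormedAddCommGroup E] [InnerProductSpace ℝ E] [CompleteSpace E]
    (F : E → ℝ) (L : ℝ) (hFdiff : Differentiable ℝ F)
    (hFgrad : ∀ p q : E, ‖gradient F p - gradient F q‖ ≤ L * ‖p - q‖) (x v : E) :
    F (x + v) ≤ F x + ⟪gradient F x, v⟫ + L / 2 * ‖v‖ ^ 2 := by
  -- The gap between `F` and its quadratic model is nonincreasing along the ray `x + t v`.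
  have hd : ∀ t : ℝ, HasDerivAt
      (fun t : ℝ => F (x + t • v) - t * ⟪gradient F x, v⟫ - L / 2 * ‖v‖ ^ 2 * t ^ 2)
      (⟪gradient F (x + t • v), v⟫ - ⟪gradient F x, v⟫ - L * ‖v‖ ^ 2 * t) t := by
    intro t
    have h1 : HasDerivAt (fun t : ℝ => x + t • v) v t := by
      simpa using ((hasDerivAt_id t).smul_const v).const_add x
    have h2 := (hFdiff (x + t • v)).hasGradientAt.hasFDerivAt.comp_hasDerivAt t h1
    have h3 := (hasDerivAt_id t).mul_const ⟪gradient F x, v⟫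
    have h4 := (hasDerivAt_pow 2 t).const_mul (L / 2 * ‖v‖ ^ 2)
    refine ((h2.sub h3).sub h4).congr_deriv ?_
    simp
    ring
  have hanti : AntitoneOn
      (fun t : ℝ => F (x + t • v) - t * ⟪gradient F x, v⟫ - L / 2 * ‖v‖ ^ 2 * t ^ 2)
      (Set.Ici 0) := by
    apply antitoneOn_of_deriv_nonpos (convex_Ici 0)
    · exact fun t _ => (hd t).continuousAt.continuousWithinAt
    · exact fun t _ => (hd t).differentiableAt.differentiableWithinAt
    · intro t ht
      rw [interior_Ici, Set.mem_Ioi] at ht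
      rw [(hd t).deriv, ← inner_sub_left]
      have h1 := real_inner_le_norm (gradient F (x + t • v) - gradient F x) v
      have h2 := hFgrad (x + t • v) x
      rw [add_sub_cancel_left, norm_smul, Real.norm_of_nonneg ht.le] at h2
      nlinarith [norm_nonneg v]
  have := hanti (Set.mem_Ici.2 le_rfl) (Set.mem_Ici.2 zero_le_one) zero_le_one
  simp only [one_smul, zero_smul, add_zero] at this
  linarith

/-- The prox point of a function that is finite somewhere has a finite value. -/
theorem prox_ne_top {E : Type*} [NormedAddCommGroup E] (h : E → EReal) (γ : ℝ) (z p x : E)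
    (hx : h x ≠ ⊤)
    (hp : IsMinOn (fun y => h y + ((‖y - z‖ ^ 2 / (2 * γ) : ℝ) : EReal)) Set.univ p) :
    h p ≠ ⊤ := by
  intro htop
  have := hp (Set.mem_univ x)
  simp only [Set.mem_ofPred_eq, htop, EReal.top_add_coe, top_le_iff] at this
  exact EReal.add_ne_top hx (EReal.coe_ne_top _) this

/-- Optimality of the proximal step: `(z - p) / γ` is a subgradient of `h` at `p = prox z`. -/
theorem prox_subgradient {E : Type*} [NormedAddCommGroup E] [InnerProductSpace ℝ E]
    (h : E → EReal) (hbot : ∀ z, h z ≠ ⊥)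
    (hconv : ∀ p q : E, ∀ a b : ℝ, 0 ≤ a → 0 ≤ b → a + b = 1 →
      h (a • p + b • q) ≤ (a : EReal) * h p + (b : EReal) * h q)
    (γ : ℝ) (hγ : 0 < γ) (z p y : E) (hy : h y ≠ ⊤)
    (hp : IsMinOn (fun y => h y + ((‖y - z‖ ^ 2 / (2 * γ) : ℝ) : EReal)) Set.univ p) :
    γ * (h p).toReal + ⟪z - p, y - p⟫ ≤ γ * (h y).toReal := by
  have hpt := prox_ne_top h γ z p y hy hp
  have ep := EReal.coe_toReal hpt (hbot p)
  have ey := EReal.coe_toReal hy (hbot y)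
  set P := (h p).toReal
  set Y := (h y).toReal
  -- Compare `p` with the points `p + t (y - p)`, then let `t` tend to `0`.
  have key : ∀ t : ℝ, 0 < t → t ≤ 1 →
      γ * P + ⟪z - p, y - p⟫ ≤ γ * Y + t * (‖y - p‖ ^ 2 / 2) := by
    intro t ht ht1
    have h1 := hp (Set.mem_univ ((1 - t) • p + t • y))
    have h2 := hconv p y (1 - t) t (by linarith) ht.le (by ring)
    simp only [Set.mem_ofPred_eq] at h1
    have h3 := h1.trans (add_le_add_left h2 _)
    rw [← ep, ← ey] at h3
    norm_cast at h3
    have e : (1 - t) • p + t • y - z = (p - z) + t • (y - p) := by module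
    rw [e, norm_add_sq_real, norm_smul, Real.norm_of_nonneg ht.le, inner_smul_right] at h3
    have e2 : ⟪z - p, y - p⟫ = -⟪p - z, y - p⟫ := by rw [← inner_neg_left, neg_sub]
    rw [e2]
    set I := ⟪p - z, y - p⟫
    have h4 := mul_le_mul_of_nonneg_left h3 (by positivity : 0 ≤ 2 * γ)
    have e3 : ∀ A B : ℝ, 2 * γ * (A + B / (2 * γ)) = 2 * γ * A + B := by
      intro A B; field_simp
    rw [e3, e3] at h4
    have h5 : t * (γ * P + -I) ≤ t * (γ * Y + t * (‖y - p‖ ^ 2 / 2)) := by nlinarith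
    exact le_of_mul_le_mul_left h5 ht
  apply le_of_forall_pos_le_add
  intro ε hε
  set N := ‖y - p‖ ^ 2 / 2
  have hN : 0 ≤ N := by positivity
  refine (key (min 1 (ε / (N + 1))) (by positivity) (min_le_left _ _)).trans ?_
  have h1 : min 1 (ε / (N + 1)) * N ≤ ε / (N + 1) * (N + 1) :=
    mul_le_mul (min_le_right _ _) (by linarith) hN (by positivity)
  rw [div_mul_cancel₀ _ (by positivity)] at h1
  linarith

theorem stmt13 {d : ℕ}
    (F : EuclideanSpace ℝ (Fin d) → ℝ) (L : ℝ) (hL : 0 < L)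
    (hFdiff : Differentiable ℝ F)
    (hFgrad : ∀ p q : EuclideanSpace ℝ (Fin d), ‖gradient F p - gradient F q‖ ≤ L * ‖p - q‖)
    (h : EuclideanSpace ℝ (Fin d) → EReal)
    (hbot : ∀ z, h z ≠ ⊥)
    (hlsc : LowerSemicontinuous h)
    (hconv : ∀ p q : EuclideanSpace ℝ (Fin d), ∀ a b : ℝ, 0 ≤ a → 0 ≤ b → a + b = 1 →
      h (a • p + b • q) ≤ (a : EReal) * h p + (b : EReal) * h q)
    (hproper : ∃ z, h z ≠ ⊤)
    (γ : ℝ) (hγ : γ = 1 / L)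
    (x : EuclideanSpace ℝ (Fin d)) (hx : h x ≠ ⊤)
    (g : EuclideanSpace ℝ (Fin d))
    (prox : EuclideanSpace ℝ (Fin d) → EuclideanSpace ℝ (Fin d))
    (hprox : ∀ z, IsMinOn (fun y => h y + ((‖y - z‖ ^ 2 / (2 * γ) : ℝ) : EReal)) Set.univ (prox z)) :
    (F (prox (x - γ • g)) : EReal) + h (prox (x - γ • g)) ≤
      (F x : EReal) + h x +
        ((-(γ / 2) * ‖γ⁻¹ • (x - prox (x - γ • g))‖ ^ 2
          + γ * ⟪g - gradient F x, γ⁻¹ • (x - prox (x - γ • gradient F x))⟫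
          + γ * ‖g - gradient F x‖ ^ 2 : ℝ) : EReal) := by
  have hγ0 : 0 < γ := by rw [hγ]; positivity
  have hLγ : L * γ = 1 := by rw [hγ]; field_simp
  set p := prox (x - γ • g) with hp
  set q := prox (x - γ • gradient F x) with hq
  have hpm := hprox (x - γ • g)
  have hqm := hprox (x - γ • gradient F x)
  rw [← hp] at hpm
  rw [← hq] at hqm
  have hpt := prox_ne_top h γ _ p x hx hpm
  have hqt := prox_ne_top h γ _ q x hx hqm
  have s1 := prox_subgradient h hbot hconv γ hγ0 _ p x hx hpm
  have s2 := prox_subgradient h hbot hconv γ hγ0 _ p q hqt hpm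
  have s3 := prox_subgradient h hbot hconv γ hγ0 _ q p hpt hqm
  have de := descent_le F L hFdiff hFgrad x (p - x)
  rw [add_sub_cancel] at de
  rw [← EReal.coe_toReal hpt (hbot p), ← EReal.coe_toReal hx (hbot x)]
  norm_cast
  set P := (h p).toReal
  set X := (h x).toReal
  set D := gradient F x
  -- Nonexpansiveness of the proximal operator, from the two subgradient inequalities.
  have hne : ‖q - p‖ ≤ γ * ‖g - D‖ := by
    have e : ⟪x - γ • g - p, q - p⟫ + ⟪x - γ • D - q, p - q⟫
        = ‖q - p‖ ^ 2 - γ * ⟪g - D, q - p⟫ := by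
      rw [← neg_sub q p, inner_neg_right, ← sub_eq_add_neg, ← inner_sub_left,
        show x - γ • g - p - (x - γ • D - q) = (q - p) - γ • (g - D) by module,
        inner_sub_left, real_inner_self_eq_norm_sq, inner_smul_left]
      rfl
    have c := real_inner_le_norm (g - D) (q - p)
    have h1 : ‖q - p‖ * ‖q - p‖ ≤ γ * ‖g - D‖ * ‖q - p‖ := by nlinarith
    rcases (norm_nonneg (q - p)).eq_or_lt with h0 | h0
    · rw [← h0]; positivity
    · exact le_of_mul_le_mul_right h1 h0
  have hc : ⟪g - D, q - p⟫ ≤ γ * ‖g - D‖ ^ 2 := by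
    have c := real_inner_le_norm (g - D) (q - p)
    nlinarith [norm_nonneg (g - D)]
  have e1 : ⟪x - γ • g - p, x - p⟫ = ‖x - p‖ ^ 2 - γ * ⟪g, x - p⟫ := by
    rw [show x - γ • g - p = (x - p) - γ • g by module, inner_sub_left,
      real_inner_self_eq_norm_sq, inner_smul_left]
    rfl
  have e2 : ⟪D, p - x⟫ = -⟪D, x - p⟫ := by rw [← inner_neg_right, neg_sub]
  have e3 : ⟪g - D, q - p⟫ = ⟪g, x - p⟫ - ⟪D, x - p⟫ - ⟪g - D, x - q⟫ := by
    rw [← inner_sub_left, ← inner_sub_right]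
    congr 1
    abel
  rw [inner_smul_right, norm_smul, Real.norm_of_nonneg (by positivity), mul_inv_cancel_left₀ hγ0.ne']
  rw [norm_sub_rev p x, e2] at de
  rw [e1] at s1
  rw [e3] at hc
  have hLi : γ⁻¹ = L := by rw [hγ]; simp
  have e4 : -(γ / 2) * (γ⁻¹ * ‖x - p‖) ^ 2 = -(L / 2) * ‖x - p‖ ^ 2 := by
    rw [hLi]; linear_combination -(L / 2) * ‖x - p‖ ^ 2 * hLγ
  rw [e4]
  have s4 : P + L * ‖x - p‖ ^ 2 - ⟪g, x - p⟫ ≤ X := by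
    have := mul_le_mul_of_nonneg_left s1 hL.le
    have e5 : L * (γ * P + (‖x - p‖ ^ 2 - γ * ⟪g, x - p⟫))
        = P + L * ‖x - p‖ ^ 2 - ⟪g, x - p⟫ := by
      linear_combination (P - ⟪g, x - p⟫) * hLγ
    have e6 : L * (γ * X) = X := by linear_combination X * hLγ
    rwa [e5, e6] at this
  linarith
end
end
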